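/- Let A be an iH₃△-algebra. The intersection of all maximal weak deductive systems of A equals {1}; equivalently, for every a ∈ A with a ≠ 1 there exists a maximal weak deductive system M of A with a ∉ M. -/

import Mathlib

class iH3 (A : Type*) extends One A where
  imp : A → A → A
  inf : A → A → A
  h1 : ∀ x y : A, imp x (imp y x) = 1
  h2 : ∀ x y z : A, imp (imp x (imp y z)) (imp (imp x y) (imp x z)) = 1
  h3 : ∀ x y : A, imp x y = 1 → imp y x = 1 → x = y
  it3 : ∀ x y z : A, imp (imp (imp x y) z) (imp (imp (imp z x) z) z) = 1
  ih1 : ∀ x y z : A, inf x (inf y z) = inf (inf x y) z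
  ih2 : ∀ x : A, inf x x = x
  ih3 : ∀ x y : A, inf x (imp x y) = inf x y
  ih4 : ∀ x y z : A, imp (imp x (inf y z)) (inf (imp x z) (imp x y)) = 1

class iH3D (A : Type*) extends iH3 A where
  box : A → A
  m1 : ∀ x : A, imp (box x) x = 1
  m2 : ∀ x y : A, imp (imp (imp y (box y)) (imp x (box (box x)))) (box (imp x y)) = imp (box x) (box (box y))
  m3 : ∀ x y : A, imp (imp (box x) (box y)) (box x) = box x

/-- A weak deductive system (w.r.t. the weak implication `x↣y := △x→y`). -/
def isWDS {A : Type*} [iH3D A] (D : Set A) : Prop :=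
  (1 : A) ∈ D ∧ ∀ x y : A, x ∈ D → iH3.imp (iH3D.box x) y ∈ D → y ∈ D

/-- A maximal weak deductive system: a proper weak deductive system whose only
weak deductive system extensions are itself and the whole algebra. -/
def isMaxWDS {A : Type*} [iH3D A] (M : Set A) : Prop :=
  isWDS M ∧ M ≠ Set.univ ∧
    ∀ D : Set A, isWDS D → M ⊆ D → D = M ∨ D = Set.univ

namespace WDS
open iH3 iH3D
variable {A : Type*} [iH3D A]

theorem imp_one (y : A) : imp y (1 : A) = 1 := by
  have h := h1 (1 : A) y
  have h' := h1 (imp y (1 : A)) 1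
  rw [h] at h'
  exact h3 _ _ h' h

theorem mp' {t : A} (h : imp (1 : A) t = 1) : t = 1 := h3 _ _ (imp_one t) h

theorem mp {s t : A} (hs : s = 1) (h : imp s t = 1) : t = 1 := by
  subst hs; exact mp' h

theorem imp_self (u : A) : imp u u = 1 :=
  mp (h1 u u) (mp (h1 u (imp u u)) (h2 u (imp u u) u))

theorem one_imp (z : A) : imp 1 z = z := by
  refine h3 _ _ ?_ (h1 z 1)
  have h := h2 (imp 1 z) 1 z
  exact mp (imp_one _) (mp (imp_self _) h)

theorem wk {s : A} (t : A) (h : s = 1) : imp t s = 1 := by rw [h, imp_one]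

theorem tr {x y z : A} (h : imp x y = 1) (h' : imp y z = 1) : imp x z = 1 :=
  mp h (mp (wk x h') (h2 x y z))

theorem box_one : box (1 : A) = 1 := by
  have h := m2 (1 : A) 1
  simp only [one_imp] at h
  rw [m3] at h
  have hc := h2 (box (1 : A)) (box 1) (box (box 1))
  rw [← h, imp_self, one_imp, one_imp] at hc
  exact hc

theorem box_box (y : A) : box (box y) = box y := by
  refine h3 _ _ (m1 _) ?_
  have h := m2 (1 : A) y
  simp only [one_imp, box_one] at h
  rw [← h]
  exact h1 _ _

theorem box_imp (x y : A) : box (imp (box x) y) = imp (box x) (box y) := by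
  have h := m2 (box x) y
  simpa only [box_box, imp_self, one_imp, imp_one] using h

/-- weak implication -/
def w (x y : A) : A := imp (box x) y

theorem wK (x y : A) : w x (w y x) = 1 := tr (m1 x) (h1 _ _)

theorem wS (x y z : A) : w (w x (w y z)) (w (w x y) (w x z)) = 1 := by
  unfold w
  rw [box_imp x y]
  exact tr (m1 _) (h2 _ _ _)

theorem wP (x y : A) : w (w (w x y) x) x = 1 := by
  unfold w
  rw [box_imp, box_imp, m3]
  exact m1 x

theorem ww (x : A) : w x x = 1 := m1 x

theorem w1 (x : A) : w x 1 = 1 := imp_one _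

theorem wmp {D : Set A} (hD : isWDS D) {x y : A} (hx : x ∈ D) (h : w x y ∈ D) : y ∈ D :=
  hD.2 x y hx h

theorem wone {D : Set A} (hD : isWDS D) {x : A} (h : x = 1) : x ∈ D := h ▸ hD.1

theorem ext_wds {D : Set A} (hD : isWDS D) (b : A) : isWDS {y | w b y ∈ D} := by
  refine ⟨wone hD (w1 b), fun x y hx hy => ?_⟩
  exact wmp hD hx (wmp hD (x := w b (w x y)) hy (wone hD (wS b x y)))

theorem exists_max {a : A} (ha : a ≠ 1) : ∃ M : Set A, isMaxWDS M ∧ a ∉ M := by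
  have hz := zorn_subset {D : Set A | isWDS D ∧ a ∉ D} (by
    intro c hc hch
    rcases c.eq_empty_or_nonempty with rfl | ⟨E, hE⟩
    · refine ⟨{1}, ⟨⟨rfl, ?_⟩, ha⟩, by simp⟩
      intro x y hx hy
      simp only [Set.mem_singleton_iff] at hx hy ⊢
      rw [hx, box_one, one_imp] at hy
      exact hy
    · refine ⟨⋃₀ c, ⟨⟨⟨E, hE, (hc hE).1.1⟩, ?_⟩, ?_⟩, fun s hs => Set.subset_sUnion_of_mem hs⟩
      · rintro x y ⟨F, hF, hx⟩ ⟨G, hG, hy⟩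
        rcases hch.total hF hG with h | h
        · exact ⟨G, hG, (hc hG).1.2 x y (h hx) hy⟩
        · exact ⟨F, hF, (hc hF).1.2 x y hx (h hy)⟩
      · rintro ⟨F, hF, hx⟩
        exact (hc hF).2 hx)
  obtain ⟨M, hM⟩ := hz
  have hW : isWDS M := hM.prop.1
  have haM : a ∉ M := hM.prop.2
  have key : ∀ b, b ∉ M → w b a ∈ M := by
    intro b hb
    by_contra hn
    have hsub : M ⊆ {y | w b y ∈ M} := fun y hy => wmp hW hy (wone hW (wK y b))
    exact hb (hM.le_of_ge (y := {y | w b y ∈ M}) ⟨ext_wds hW b, hn⟩ hsub (wone hW (ww b)))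
  refine ⟨M, ⟨hW, fun h => haM (h ▸ Set.mem_univ a), fun D hD hMD => ?_⟩, haM⟩
  by_cases haD : a ∈ D
  · right
    refine Set.eq_univ_of_forall fun c => ?_
    have hc : w a c ∈ M := by
      by_contra hn
      exact haM (wmp hW (key _ hn) (wone hW (wP a c)))
    exact wmp hD haD (hMD hc)
  · left
    exact (hM.le_of_ge ⟨hD, haD⟩ hMD).antisymm hMD

end WDS

/-- In an iH₃△-algebra, the intersection of all maximal weak deductive
systems equals `{1}`. -/
theorem stmt8 {A : Type*} [iH3D A] :
    ⋂₀ {M : Set A | isMaxWDS M} = {(1 : A)} := by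
  ext a
  simp only [Set.mem_sInter, Set.mem_ofPred_eq, Set.mem_singleton_iff]
  constructor
  · intro h
    by_contra ha
    obtain ⟨M, hM, haM⟩ := WDS.exists_max ha
    exact haM (h M hM)
  · rintro rfl M hM
    exact hM.1.1
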